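/- For every m ≥ 0, the first temporal basis function b_{1,m}(t) := 8·μ_1(t)·(t/Δt)²·P_m(2t/Δt − 1) is infinitely differentiable on ℝ and satisfies b_{1,m}(0) = 0 and b′_{1,m}(0) = 0. -/

import Mathlib

/-!
Write `L t = 2 artanh t = log ((1 + t) / (1 - t))`, so that `f t = 1/2 + π^(-1/2) ∫₀^{L t} exp (-s²)`
on `(-1, 1)`. The derivative of `L` is a function of `L` itself: `L' = 1 + (exp L + exp (-L)) / 2`.
Hence the functions `G i j` equal to `L ^ i * exp (j * L - L ^ 2)` on `(-1, 1)` and to `0` elsewhere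
have a span that is closed under differentiation there.

At the endpoints, `exp (-|L t|) ≤ 1 - |t|` and `u ^ i * exp (j * u - u ^ 2) = O(exp (-2 |u|))`, so
`G i j t = O((1 - |t|)²)` and `G i j` is differentiable at `±1` with derivative zero
(`glued_bound`, `glued_hasDerivAt`). Therefore every `G i j` is smooth by induction on the order of
differentiability (`glued_contDiff`).

The function `f` is continuous, because the Gaussian integral over a half line is `√π / 2`, and away
from `±1` its derivative is a combination of `G 0 0`, `G 0 1` and `G 0 (-1)`. As that combination
is smooth and two exceptional points do not matter in the fundamental theorem of calculus, `f` is the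
integral of a smooth function, hence smooth (`cutoff_contDiff`). Finally `b m t` is `t * t` times a
smooth function of `t`.
-/

/-- The Legendre polynomial of degree `m`, given by Rodrigues' formula
`P_m(x) = 1/(2^m m!) dᵐ/dxᵐ [(x² - 1)^m]`. -/
noncomputable def legendrePoly (m : ℕ) : Polynomial ℝ :=
  (1 / (2 ^ m * (m.factorial : ℝ))) •
    (Polynomial.derivative^[m] ((Polynomial.X ^ 2 - 1) ^ m))

open Set Filter Topology Asymptotics

/-- `2 artanh t`, as a logarithm; it is used for `|t| < 1` only. -/
noncomputable def twoArtanh (t : ℝ) : ℝ := Real.log ((1 + t) / (1 - t))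

/-- The function `u ^ i * exp (j * u - u ^ 2)` of `u = 2 artanh t`, extended by zero outside
`(-1, 1)`. -/
noncomputable def glued (i : ℕ) (j t : ℝ) : ℝ :=
  if |t| < 1 then twoArtanh t ^ i * Real.exp (j * twoArtanh t - twoArtanh t ^ 2) else 0

/-- The extension by zero of `u ^ i * exp (j * u - u ^ 2) * (du/dt)`, where `u = 2 artanh t` and
`du/dt = 1 + (exp u + exp (-u)) / 2`. -/
noncomputable def gluedMulDeriv (i : ℕ) (j t : ℝ) : ℝ :=
  glued i j t + (glued i (j + 1) t + glued i (j - 1) t) / 2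

lemma exp_twoArtanh {t : ℝ} (ht : |t| < 1) : Real.exp (twoArtanh t) = (1 + t) / (1 - t) := by
  obtain ⟨h1, h2⟩ := abs_lt.1 ht
  exact Real.exp_log (div_pos (by linarith) (by linarith))

lemma twoArtanh_hasDerivAt {t : ℝ} (ht : |t| < 1) :
    HasDerivAt twoArtanh
      (1 + (Real.exp (twoArtanh t) + Real.exp (-twoArtanh t)) / 2) t := by
  obtain ⟨h1, h2⟩ := abs_lt.1 ht
  have h3 : (1 + t) ≠ 0 := by linarith
  have h4 : (1 - t) ≠ 0 := by linarith
  have h := (((hasDerivAt_id t).const_add 1).div ((hasDerivAt_id t).const_sub 1) h4).log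
    (div_ne_zero h3 h4)
  refine h.congr_deriv ?_
  rw [Real.exp_neg, exp_twoArtanh ht]
  simp only [id, Pi.div_apply]
  field_simp
  ring

lemma exp_neg_abs_twoArtanh_le {t : ℝ} (ht : |t| < 1) :
    Real.exp (-|twoArtanh t|) ≤ 1 - |t| := by
  obtain ⟨h1, h2⟩ := abs_lt.1 ht
  have h3 : 0 < 1 + t := by linarith
  have h4 : 0 < 1 - t := by linarith
  have e := exp_twoArtanh ht
  rcases le_total 0 t with h | h
  · rw [abs_of_nonneg h]
    calc Real.exp (-|twoArtanh t|) ≤ Real.exp (-twoArtanh t) :=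
          Real.exp_le_exp.2 (neg_le_neg (le_abs_self _))
      _ = (1 - t) / (1 + t) := by rw [Real.exp_neg, e, inv_div]
      _ ≤ 1 - t := div_le_self h4.le (by linarith)
  · rw [abs_of_nonpos h, sub_neg_eq_add]
    calc Real.exp (-|twoArtanh t|) ≤ Real.exp (twoArtanh t) :=
          Real.exp_le_exp.2 (neg_abs_le _)
      _ = (1 + t) / (1 - t) := e
      _ ≤ 1 + t := div_le_self h3.le (by linarith)

lemma gaussian_monomial_bound (i : ℕ) (j : ℝ) :
    ∃ C : ℝ, 0 ≤ C ∧
      ∀ u : ℝ, |u ^ i * Real.exp (j * u - u ^ 2)| ≤ C * Real.exp (-|u|) ^ 2 := by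
  refine ⟨i.factorial * Real.exp ((3 + |j|) ^ 2), by positivity, fun u => ?_⟩
  have h1 : |u| ^ i ≤ i.factorial * Real.exp |u| := by
    have := Real.pow_div_factorial_le_exp |u| (abs_nonneg u) i
    rwa [div_le_iff₀ (by positivity), mul_comm] at this
  have h2 : j * u ≤ |j| * |u| := by rw [← abs_mul]; exact le_abs_self _
  rw [abs_mul, abs_pow, Real.abs_exp]
  calc |u| ^ i * Real.exp (j * u - u ^ 2)
      ≤ (i.factorial * Real.exp |u|) * Real.exp (j * u - u ^ 2) := by gcongr
    _ = i.factorial * Real.exp (|u| + (j * u - u ^ 2)) := by rw [Real.exp_add]; ring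
    _ ≤ i.factorial * Real.exp ((3 + |j|) ^ 2 + (-|u| + -|u|)) := by
        refine mul_le_mul_of_nonneg_left (Real.exp_le_exp.2 ?_) (by positivity)
        rw [← sq_abs u]
        -- complete the square in `|u|`
        nlinarith [sq_nonneg (|u| - (3 + |j|) / 2), sq_nonneg (3 + |j|)]
    _ = _ := by rw [Real.exp_add, Real.exp_add]; ring

/-- Second-order vanishing at both endpoints of `(-1, 1)`. -/
lemma glued_bound (i : ℕ) (j : ℝ) :
    ∃ C : ℝ, ∀ t : ℝ, |glued i j t| ≤ C * (1 - |t|) ^ 2 := by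
  obtain ⟨C, hC, h⟩ := gaussian_monomial_bound i j
  refine ⟨C, fun t => ?_⟩
  unfold glued
  split_ifs with ht
  · refine (h _).trans ?_
    have := exp_neg_abs_twoArtanh_le ht
    gcongr
  · rw [abs_zero]; positivity

lemma glued_of_one_le (i : ℕ) (j : ℝ) {t : ℝ} (ht : 1 ≤ |t|) : glued i j t = 0 :=
  if_neg ht.not_gt

lemma gluedMulDeriv_of_one_le (i : ℕ) (j : ℝ) {t : ℝ} (ht : 1 ≤ |t|) :
    gluedMulDeriv i j t = 0 := by
  simp [gluedMulDeriv, glued_of_one_le _ _ ht]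

lemma gluedMulDeriv_of_lt (i : ℕ) (j : ℝ) {t : ℝ} (ht : |t| < 1) :
    gluedMulDeriv i j t = twoArtanh t ^ i * Real.exp (j * twoArtanh t - twoArtanh t ^ 2) *
      (1 + (Real.exp (twoArtanh t) + Real.exp (-twoArtanh t)) / 2) := by
  simp only [gluedMulDeriv, glued, if_pos ht]
  set u := twoArtanh t
  rw [show (j + 1) * u - u ^ 2 = (j * u - u ^ 2) + u by ring,
    show (j - 1) * u - u ^ 2 = (j * u - u ^ 2) + -u by ring, Real.exp_add, Real.exp_add]
  ring

lemma eventually_abs_lt_one {t : ℝ} (ht : |t| < 1) : ∀ᶠ x in 𝓝 t, |x| < 1 :=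
  continuous_abs.continuousAt.eventually_lt_const ht

lemma eventually_one_lt_abs {t : ℝ} (ht : 1 < |t|) : ∀ᶠ x in 𝓝 t, 1 < |x| :=
  continuous_abs.continuousAt.eventually_const_lt ht

/-- For `i = 0` the truncated exponent `i - 1` is harmless, as its coefficient vanishes. -/
lemma glued_hasDerivAt (i : ℕ) (j t : ℝ) :
    HasDerivAt (glued i j)
      (i * gluedMulDeriv (i - 1) j t + j * gluedMulDeriv i j t
        - 2 * gluedMulDeriv (i + 1) j t) t := by
  rcases lt_trichotomy |t| 1 with ht | ht | ht
  · have hL := twoArtanh_hasDerivAt ht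
    have h := (hL.pow i).mul (((hL.const_mul j).sub (hL.pow 2)).exp)
    have heq : glued i j =ᶠ[𝓝 t]
        (twoArtanh ^ i * fun x => Real.exp (j * twoArtanh x - twoArtanh x ^ 2)) := by
      filter_upwards [eventually_abs_lt_one ht] with x hx
      simp [glued, hx]
    refine (h.congr_of_eventuallyEq heq).congr_deriv ?_
    simp only [gluedMulDeriv_of_lt _ _ ht, Pi.pow_apply, Pi.sub_apply]
    push_cast
    ring
  · simp only [gluedMulDeriv_of_one_le _ _ ht.ge, mul_zero, add_zero, sub_zero]
    obtain ⟨C, hC⟩ := glued_bound i j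
    have hO : glued i j =O[𝓝 t] fun x => ‖x - t‖ ^ 2 := by
      refine IsBigO.of_bound |C| (Eventually.of_forall fun x => ?_)
      have h1 : (1 - |x|) ^ 2 ≤ ‖x - t‖ ^ 2 := by
        rw [Real.norm_eq_abs, ← ht, abs_sub_comm x t]
        exact sq_le_sq.2 ((abs_abs_sub_abs_le t x).trans (le_abs_self _))
      rw [Real.norm_eq_abs, Real.norm_of_nonneg (by positivity : 0 ≤ ‖x - t‖ ^ 2)]
      calc _ ≤ C * (1 - |x|) ^ 2 := hC x
        _ ≤ |C| * (1 - |x|) ^ 2 := by gcongr; exact le_abs_self C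
        _ ≤ _ := by gcongr
    have := (hO.hasFDerivAt one_lt_two).hasDerivAt
    simpa using this
  · simp only [gluedMulDeriv_of_one_le _ _ ht.le, mul_zero, add_zero, sub_zero]
    refine (hasDerivAt_const t (0 : ℝ)).congr_of_eventuallyEq ?_
    filter_upwards [eventually_one_lt_abs ht] with x hx
    exact glued_of_one_le i j hx.le

lemma glued_contDiff_nat (n : ℕ) : ∀ (i : ℕ) (j : ℝ), ContDiff ℝ n (glued i j) := by
  induction n with
  | zero =>
    intro i j
    exact contDiff_zero.2
      (continuous_iff_continuousAt.2 fun t => (glued_hasDerivAt i j t).continuousAt)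
  | succ n ih =>
    intro i j
    have hW : ∀ (i : ℕ) (j : ℝ), ContDiff ℝ n (gluedMulDeriv i j) := fun i j =>
      (ih i j).add (((ih i (j + 1)).add (ih i (j - 1))).div_const 2)
    push_cast
    refine contDiff_succ_iff_deriv.2
      ⟨fun t => (glued_hasDerivAt i j t).differentiableAt, by simp, ?_⟩
    rw [show deriv (glued i j) = _ from funext fun t => (glued_hasDerivAt i j t).deriv]
    exact ((contDiff_const.mul (hW _ j)).add (contDiff_const.mul (hW i j))).sub
      (contDiff_const.mul (hW _ j))

lemma glued_contDiff (i : ℕ) (j : ℝ) : ContDiff ℝ (⊤ : ℕ∞) (glued i j) :=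
  contDiff_infty.2 fun n => glued_contDiff_nat n i j

lemma gluedMulDeriv_contDiff (i : ℕ) (j : ℝ) : ContDiff ℝ (⊤ : ℕ∞) (gluedMulDeriv i j) :=
  (glued_contDiff i j).add
    (((glued_contDiff i (j + 1)).add (glued_contDiff i (j - 1))).div_const 2)

lemma tendsto_integral_gaussian_atTop :
    Tendsto (fun u : ℝ => 1 / 2 + (1 / Real.sqrt Real.pi) *
      ∫ s in (0 : ℝ)..u, Real.exp (-s ^ 2)) atTop (𝓝 1) := by
  have hi : MeasureTheory.IntegrableOn (fun s : ℝ => Real.exp (-s ^ 2)) (Ioi 0) := by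
    simpa using (integrable_exp_neg_mul_sq (b := 1) one_pos).integrableOn (s := Ioi (0 : ℝ))
  have h := MeasureTheory.intervalIntegral_tendsto_integral_Ioi 0 hi tendsto_id
  have hv : ∫ s in Ioi (0 : ℝ), Real.exp (-s ^ 2) = Real.sqrt Real.pi / 2 := by
    simpa using integral_gaussian_Ioi 1
  rw [hv] at h
  have hp : Real.sqrt Real.pi ≠ 0 := (Real.sqrt_pos.2 Real.pi_pos).ne'
  have h' := (h.const_mul (1 / Real.sqrt Real.pi)).const_add (1 / 2)
  rw [show 1 / 2 + 1 / Real.sqrt Real.pi * (Real.sqrt Real.pi / 2) = 1 by field_simp; norm_num] at h'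
  exact h'

lemma tendsto_twoArtanh_one : Tendsto twoArtanh (𝓝[<] 1) atTop := by
  refine Real.tendsto_log_atTop.comp ?_
  have h1 : Tendsto (fun t : ℝ => 1 + t) (𝓝[<] 1) (𝓝 2) := by
    have : Tendsto (fun t : ℝ => 1 + t) (𝓝 1) (𝓝 (1 + 1)) := (continuous_const_add 1).tendsto 1
    norm_num at this
    exact this.mono_left nhdsWithin_le_nhds
  have h2 : Tendsto (fun t : ℝ => 1 - t) (𝓝[<] 1) (𝓝[>] 0) := by
    refine tendsto_nhdsWithin_iff.2 ⟨?_, ?_⟩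
    · have : Tendsto (fun t : ℝ => 1 - t) (𝓝 1) (𝓝 (1 - 1)) := (continuous_sub_left 1).tendsto 1
      rw [sub_self] at this
      exact this.mono_left nhdsWithin_le_nhds
    · filter_upwards [self_mem_nhdsWithin] with t ht
      simpa using ht
  simpa only [div_eq_mul_inv, Function.comp_def] using
    h1.pos_mul_atTop two_pos (tendsto_inv_nhdsGT_zero.comp h2)

lemma twoArtanh_neg (t : ℝ) : twoArtanh (-t) = -twoArtanh t := by
  unfold twoArtanh
  rw [← Real.log_inv, inv_div, sub_neg_eq_add, ← sub_eq_add_neg]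

/-- The function `f` of the theorem is smooth on the whole line. -/
lemma cutoff_contDiff (f : ℝ → ℝ)
    (hmid : ∀ t : ℝ, |t| < 1 → f t = 1 / 2 + (1 / Real.sqrt Real.pi) *
      ∫ s in (0 : ℝ)..(twoArtanh t), Real.exp (-s ^ 2))
    (hleft : ∀ t : ℝ, t ≤ -1 → f t = 0) (hright : ∀ t : ℝ, 1 ≤ t → f t = 1) :
    ContDiff ℝ (⊤ : ℕ∞) f := by
  have hcont : Continuous fun s : ℝ => Real.exp (-s ^ 2) := by fun_prop
  have hsymm : ∀ t, f t = 1 - f (-t) := by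
    intro t
    rcases lt_or_ge |t| 1 with ht | ht
    · have ho : ∫ s in (0 : ℝ)..(-twoArtanh t), Real.exp (-s ^ 2) =
          -∫ s in (0 : ℝ)..(twoArtanh t), Real.exp (-s ^ 2) := by
        have := intervalIntegral.integral_comp_neg (a := 0) (b := twoArtanh t)
          (fun s : ℝ => Real.exp (-s ^ 2))
        simp only [neg_sq, neg_zero] at this
        rw [this, intervalIntegral.integral_symm]
      rw [hmid t ht, hmid (-t) (by rwa [abs_neg]), twoArtanh_neg, ho]
      ring
    · rcases le_abs'.1 ht with h | h
      · rw [hleft t h, hright (-t) (by linarith)]; ring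
      · rw [hright t h, hleft (-t) (by linarith)]; ring
  have hc1 : ContinuousAt f 1 := by
    refine continuousAt_iff_continuous_left'_right'.2 ⟨?_, ?_⟩
    · unfold ContinuousWithinAt
      rw [hright 1 le_rfl]
      refine (tendsto_integral_gaussian_atTop.comp tendsto_twoArtanh_one).congr' ?_
      filter_upwards [Ioo_mem_nhdsLT (show (-1 : ℝ) < 1 by norm_num)] with t ht
      exact (hmid t (abs_lt.2 ht)).symm
    · exact continuousWithinAt_const.congr (fun t ht => hright t (le_of_lt ht)) (hright 1 le_rfl)
  have hcneg : ContinuousAt f (-1) := by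
    rw [show f = fun t => 1 - f (-t) from funext hsymm]
    refine continuousAt_const.sub (ContinuousAt.comp (f := fun t : ℝ => -t) ?_ (by fun_prop))
    simpa using hc1
  have hne : ∀ t : ℝ, |t| ≠ 1 →
      HasDerivAt f ((1 / Real.sqrt Real.pi) * gluedMulDeriv 0 0 t) t := by
    intro t ht
    rcases lt_or_gt_of_ne ht with ht | ht
    · have hF := intervalIntegral.integral_hasDerivAt_right
        (hcont.intervalIntegrable 0 (twoArtanh t))
        (hcont.stronglyMeasurableAtFilter _ _) hcont.continuousAt
      have h := ((hF.comp t (twoArtanh_hasDerivAt ht)).const_mul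
        (1 / Real.sqrt Real.pi)).const_add (1 / 2)
      have heq : f =ᶠ[𝓝 t] fun x => 1 / 2 + (1 / Real.sqrt Real.pi) *
          ((fun u => ∫ s in (0 : ℝ)..u, Real.exp (-s ^ 2)) ∘ twoArtanh) x := by
        filter_upwards [eventually_abs_lt_one ht] with x hx
        exact hmid x hx
      refine (h.congr_of_eventuallyEq heq).congr_deriv ?_
      rw [gluedMulDeriv_of_lt _ _ ht]
      simp
    · rw [gluedMulDeriv_of_one_le _ _ ht.le, mul_zero]
      rcases lt_abs.1 ht with h | h
      · refine (hasDerivAt_const t (1 : ℝ)).congr_of_eventuallyEq ?_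
        filter_upwards [lt_mem_nhds h] with x hx using hright x hx.le
      · refine (hasDerivAt_const t (0 : ℝ)).congr_of_eventuallyEq ?_
        filter_upwards [gt_mem_nhds (show t < -1 by linarith)] with x hx using hleft x hx.le
  have hsmooth : ContDiff ℝ (⊤ : ℕ∞)
      fun t => (1 / Real.sqrt Real.pi) * gluedMulDeriv 0 0 t :=
    contDiff_const.mul (gluedMulDeriv_contDiff 0 0)
  have hf : Continuous f := continuous_iff_continuousAt.2 fun t => by
    by_cases ht : |t| = 1
    · rcases eq_or_eq_neg_of_abs_eq ht with rfl | rfl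
      · exact hc1
      · exact hcneg
    · exact (hne t ht).continuousAt
  -- the fundamental theorem of calculus tolerates the two exceptional points `±1`
  have hint : ∀ t, f t = (∫ x in (0 : ℝ)..t, (1 / Real.sqrt Real.pi) * gluedMulDeriv 0 0 x) + f 0 := by
    intro t
    rw [MeasureTheory.integral_eq_of_hasDerivAt_off_countable f _ (s := {1, -1})
      (Set.toFinite _).countable hf.continuousOn (fun x hx => hne x fun h => hx.2 ?_)
      (hsmooth.continuous.intervalIntegrable _ _)]
    · ring
    · simpa using eq_or_eq_neg_of_abs_eq h
  have hder : ∀ t : ℝ, HasDerivAt f ((1 / Real.sqrt Real.pi) * gluedMulDeriv 0 0 t) t := by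
    intro t
    rw [funext hint]
    exact (intervalIntegral.integral_hasDerivAt_right
      (hsmooth.continuous.intervalIntegrable _ _)
      (hsmooth.continuous.stronglyMeasurableAtFilter _ _)
      hsmooth.continuous.continuousAt).add_const _
  refine contDiff_infty_iff_deriv.2 ⟨fun t => (hder t).differentiableAt, ?_⟩
  rw [show deriv f = _ from funext fun t => (hder t).deriv]
  exact hsmooth

/-- For every `m ≥ 0`, the first temporal basis function
`b_{1,m}(t) = 8 μ_1(t) (t/Δt)² P_m(2t/Δt - 1)` (with `μ_1 = 1 - f_0`) is infinitely
differentiable on `ℝ` and satisfies `b_{1,m}(0) = 0` and `b'_{1,m}(0) = 0`. -/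
theorem first_temporal_basis_smooth_and_vanishing
    (T : ℝ) (hT : 0 < T) (N : ℕ) (hN : 2 ≤ N)
    (Δt : ℝ) (hΔt : Δt = T / ((N : ℝ) - 1))
    (tj : ℤ → ℝ) (htj : ∀ j : ℤ, tj j = (j : ℝ) * Δt)
    (f : ℝ → ℝ)
    (hmid : ∀ t : ℝ, |t| < 1 →
      f t = 1 / 2 + (1 / Real.sqrt Real.pi) *
        ∫ s in (0 : ℝ)..(2 * ((1 / 2) * Real.log ((1 + t) / (1 - t)))), Real.exp (-s ^ 2))
    (hleft : ∀ t : ℝ, t ≤ -1 → f t = 0)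
    (hright : ∀ t : ℝ, 1 ≤ t → f t = 1)
    (fj : ℤ → ℝ → ℝ) (hfj : ∀ (j : ℤ) (t : ℝ), fj j t = f (2 * (t - tj j) / Δt - 1))
    (μ₁ : ℝ → ℝ) (hμ₁ : ∀ t : ℝ, μ₁ t = 1 - fj 0 t)
    (b : ℕ → ℝ → ℝ)
    (hb : ∀ (m : ℕ) (t : ℝ),
      b m t = 8 * μ₁ t * (t / Δt) ^ 2 * (legendrePoly m).eval (2 * t / Δt - 1)) :
    ∀ m : ℕ, ContDiff ℝ (⊤ : ℕ∞) (b m) ∧ b m 0 = 0 ∧ deriv (b m) 0 = 0 := by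
  have hf : ContDiff ℝ (⊤ : ℕ∞) f := by
    refine cutoff_contDiff f (fun t ht => ?_) hleft hright
    rw [hmid t ht, twoArtanh, show ∀ x : ℝ, 2 * (1 / 2 * x) = x from fun x => by ring]
  intro m
  have hP : ContDiff ℝ (⊤ : ℕ∞) fun t => (legendrePoly m).eval (2 * t / Δt - 1) :=
    ContDiff.comp (g := fun x => (legendrePoly m).eval x) (by
      simpa only [Polynomial.coe_aeval_eq_eval] using (legendrePoly m).contDiff_aeval (𝕜 := ℝ) (⊤ : ℕ∞))
      (by fun_prop : ContDiff ℝ (⊤ : ℕ∞) fun t : ℝ => 2 * t / Δt - 1)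
  have hμ : ContDiff ℝ (⊤ : ℕ∞) μ₁ := by
    rw [show μ₁ = fun t => 1 - f (2 * (t - tj 0) / Δt - 1) from
      funext fun t => by rw [hμ₁, hfj]]
    exact contDiff_const.sub
      (hf.comp (by fun_prop : ContDiff ℝ (⊤ : ℕ∞) fun t : ℝ => 2 * (t - tj 0) / Δt - 1))
  have hg : ContDiff ℝ (⊤ : ℕ∞) fun t =>
      8 / Δt ^ 2 * μ₁ t * (legendrePoly m).eval (2 * t / Δt - 1) :=
    (contDiff_const.mul hμ).mul hP
  set g : ℝ → ℝ := fun t => 8 / Δt ^ 2 * μ₁ t * (legendrePoly m).eval (2 * t / Δt - 1) with hgdef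
  have hbg : b m = fun t => t * (t * g t) := by
    funext t
    rw [hb, hgdef]
    ring
  rw [hbg]
  have hk : ContDiff ℝ (⊤ : ℕ∞) fun t => t * g t := contDiff_id.mul hg
  refine ⟨contDiff_id.mul hk, by simp, ?_⟩
  have hd := (hasDerivAt_id (0 : ℝ)).mul
    ((hk.differentiable (by simp)) 0).hasDerivAt
  refine HasDerivAt.deriv (hd.congr_deriv ?_)
  simp
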